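/- arXiv:math/0507441 — 2 statements merged into one kernel-verified Lean document; each statement's English description precedes it below -/
import Mathlib

section
/- Escape from subvarieties (Lemma of Eskin–Mozes–Oh, case 𝔾 = SL_d): Let K be an algebraically closed field, d ≥ 2, and let X be a proper Zariski-closed subset of SL_d(K), i.e. X = {g ∈ SL_d(K) : p(g) = 0 for all p ∈ P} for some set P of polynomials in the d² matrix entries with coefficients in K, and X ≠ SL_d(K). Then there is an integer k = k(d,X) such that for every subset Σ ⊆ SL_d(K) with 1 ∈ Σ generating a Zariski dense subgroup of SL_d(K), the set Σ^k is not contained in X. -/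
open Matrix Pointwise

/-!
Let `G` act on functions `G → K` by right translation. A polynomial `f` in the matrix entries is a
representative function: its translates span a space of some finite dimension `n`. If `1 ∈ S`, the
spans of the translates of `f` by `S ^ m` increase with `m`, and once two consecutive ones agree
the chain is constant and its limit is stable under `S`, hence, being finite-dimensional, under the
group generated by `S`. This happens by step `n`. Since `f g` is the value at `1` of the translate
by `g`, a function vanishing on `S ^ n` therefore vanishes on the whole group generated by `S`.
As `n` depends on `f` only, it is the required exponent for any equation `f` of `X` that does not
hold identically.
-/

section OrbitSpan

variable {G K V : Type*}

section Semiring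

variable [CommSemiring K] [AddCommMonoid V] [Module K V] [Monoid G]

/-- The subspace spanned by the part `{ρ g v | g ∈ T}` of the orbit of a vector `v`. -/
def orbitSpan (ρ : Representation K G V) (v : V) (T : Set G) : Submodule K V :=
  Submodule.span K ((fun g => ρ g v) '' T)

variable {ρ : Representation K G V} {v : V} {S T : Set G}

theorem orbitSpan_le_iff {W : Submodule K V} : orbitSpan ρ v T ≤ W ↔ ∀ g ∈ T, ρ g v ∈ W := by
  rw [orbitSpan, Submodule.span_le, Set.image_subset_iff]
  rfl

theorem apply_mem_orbitSpan {g : G} (hg : g ∈ T) : ρ g v ∈ orbitSpan ρ v T :=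
  orbitSpan_le_iff.1 le_rfl g hg

theorem orbitSpan_mono (h : S ⊆ T) : orbitSpan ρ v S ≤ orbitSpan ρ v T :=
  Submodule.span_mono (Set.image_mono h)

theorem orbitSpan_mul : orbitSpan ρ v (S * T) = ⨆ s ∈ S, (orbitSpan ρ v T).map (ρ s) := by
  simp only [orbitSpan, Submodule.map_span, ← Submodule.span_iUnion₂, Set.image_image,
    ← Module.End.mul_apply, ← map_mul]
  rw [← Set.iUnion_mul_left_image, Set.image_iUnion₂]
  simp only [Set.image_image]

theorem orbitSpan_pow_monotone (h1 : 1 ∈ S) : Monotone fun m : ℕ => orbitSpan ρ v (S ^ m) :=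
  fun _ _ h => orbitSpan_mono (Set.pow_subset_pow_right h1 h)

end Semiring

variable [Field K] [AddCommGroup V] [Module K V]

section Monoid

variable [Monoid G] {ρ : Representation K G V} {v : V} {S T : Set G}

theorem finiteDimensional_orbitSpan_of_forall_mem (W : Submodule K V) [FiniteDimensional K W]
    (hv : ∀ g ∈ T, ρ g v ∈ W) : FiniteDimensional K (orbitSpan ρ v T) :=
  Submodule.finiteDimensional_of_le (orbitSpan_le_iff.2 hv)

theorem finiteDimensional_orbitSpan [FiniteDimensional K (orbitSpan ρ v Set.univ)] (T : Set G) :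
    FiniteDimensional K (orbitSpan ρ v T) :=
  Submodule.finiteDimensional_of_le (orbitSpan_mono T.subset_univ)

theorem orbitSpan_pow_succ_eq [FiniteDimensional K (orbitSpan ρ v Set.univ)] (h1 : 1 ∈ S) {n : ℕ}
    (hn : Module.finrank K (orbitSpan ρ v Set.univ) ≤ n) :
    orbitSpan ρ v (S ^ (n + 1)) = orbitSpan ρ v (S ^ n) := by
  have := finiteDimensional_orbitSpan (ρ := ρ) (v := v)
  let dim (m : ℕ) := Module.finrank K (orbitSpan ρ v (S ^ m))
  have dim_mono : Monotone dim := fun _ _ h => Submodule.finrank_mono (orbitSpan_pow_monotone h1 h)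
  have dim_le (m : ℕ) : dim m ≤ Module.finrank K (orbitSpan ρ v Set.univ) :=
    Submodule.finrank_mono (orbitSpan_mono (Set.subset_univ _))
  have eq_of_dim_eq {m : ℕ} (h : dim m = dim (m + 1)) :
      orbitSpan ρ v (S ^ m) = orbitSpan ρ v (S ^ (m + 1)) :=
    Submodule.eq_of_le_of_finrank_eq (orbitSpan_pow_monotone h1 m.le_succ) h
  have dim_stable (m : ℕ) (h : dim m = dim (m + 1)) : dim (m + 1) = dim (m + 2) := by
    have eq_succ : orbitSpan ρ v (S ^ (m + 1)) = orbitSpan ρ v (S ^ (m + 2)) := by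
      rw [pow_succ' S m, pow_succ' S (m + 1), orbitSpan_mul, orbitSpan_mul, eq_of_dim_eq h]
    exact congrArg (fun W : Submodule K V => Module.finrank K W) eq_succ
  have dim_eq {m : ℕ} := Nat.stabilises_of_monotone (n := m) dim_mono dim_le dim_stable
  exact (eq_of_dim_eq ((dim_eq hn).trans (dim_eq (hn.trans n.le_succ)).symm)).symm

end Monoid

section Group

variable [Group G] {ρ : Representation K G V} {v : V} {S : Set G}

theorem representation_map_inv_le {W : Submodule K V} [FiniteDimensional K W] {g : G}
    (hW : W.map (ρ g) ≤ W) : W.map (ρ g⁻¹) ≤ W := by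
  have map_eq : W.map (ρ g) = W :=
    Submodule.eq_of_le_of_finrank_eq hW
      (Submodule.equivMapOfInjective (ρ g) (ρ.apply_bijective g).injective W).finrank_eq.symm
  calc W.map (ρ g⁻¹) = (W.map (ρ g)).map (ρ g⁻¹) := by rw [map_eq]
    _ ≤ W := by
      rw [← Submodule.map_comp, ← Module.End.mul_eq_comp, ← map_mul, inv_mul_cancel, map_one,
        Module.End.one_eq_id, Submodule.map_id]

theorem representation_map_le_of_mem_closure {W : Submodule K V} [FiniteDimensional K W]
    (hW : ∀ s ∈ S, W.map (ρ s) ≤ W) {g : G} (hg : g ∈ Subgroup.closure S) :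
    W.map (ρ g) ≤ W := by
  induction hg using Subgroup.closure_induction with
  | mem s hs => exact hW s hs
  | one => rw [map_one, Module.End.one_eq_id, Submodule.map_id]
  | mul x y _ _ hx hy =>
    rw [map_mul, Module.End.mul_eq_comp, Submodule.map_comp]
    exact (Submodule.map_mono hy).trans hx
  | inv x _ hx => exact representation_map_inv_le hx

theorem orbitSpan_closure_le [FiniteDimensional K (orbitSpan ρ v Set.univ)] (h1 : 1 ∈ S) {n : ℕ}
    (hn : Module.finrank K (orbitSpan ρ v Set.univ) ≤ n) :
    orbitSpan ρ v (Subgroup.closure S) ≤ orbitSpan ρ v (S ^ n) := by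
  have := finiteDimensional_orbitSpan (ρ := ρ) (v := v) (S ^ n)
  have v_mem : v ∈ orbitSpan ρ v (S ^ n) := by
    simpa only [map_one, Module.End.one_apply] using
      apply_mem_orbitSpan (ρ := ρ) (v := v) (Set.one_mem_pow h1)
  have map_le (s : G) (hs : s ∈ S) :
      (orbitSpan ρ v (S ^ n)).map (ρ s) ≤ orbitSpan ρ v (S ^ n) :=
    calc (orbitSpan ρ v (S ^ n)).map (ρ s)
        ≤ ⨆ t ∈ S, (orbitSpan ρ v (S ^ n)).map (ρ t) :=
          le_biSup (fun t => (orbitSpan ρ v (S ^ n)).map (ρ t)) hs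
      _ = orbitSpan ρ v (S ^ (n + 1)) := by rw [pow_succ', orbitSpan_mul]
      _ = orbitSpan ρ v (S ^ n) := orbitSpan_pow_succ_eq h1 hn
  exact orbitSpan_le_iff.2 fun g hg =>
    representation_map_le_of_mem_closure map_le hg (Submodule.mem_map_of_mem v_mem)

end Group

end OrbitSpan

section RepresentativeFunctions

variable {K G : Type*}

variable (K G) in
/-- The representation of `G` on functions `G → K` by right translation. Mathlib's
`TannakaDuality.FiniteGroup.rightRegular` requires `G` to be a group in the universe of `K`. -/
def rightTranslation [CommSemiring K] [Monoid G] : Representation K G (G → K) where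
  toFun h := LinearMap.funLeft K K (· * h)
  map_one' := by ext; simp [LinearMap.funLeft_apply]
  map_mul' _ _ := by ext; simp [LinearMap.funLeft_apply, mul_assoc]

@[simp]
theorem rightTranslation_apply [CommSemiring K] [Monoid G] (f : G → K) (g h : G) :
    rightTranslation K G h f g = f (g * h) := rfl

theorem rightTranslation_map_mul [CommSemiring K] [Monoid G] (f₁ f₂ : G → K) (h : G) :
    rightTranslation K G h (f₁ * f₂) = rightTranslation K G h f₁ * rightTranslation K G h f₂ := rfl

theorem orbitSpan_rightTranslation_le_ker_iff [CommSemiring K] [Monoid G] {f : G → K} {T : Set G} :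
    orbitSpan (rightTranslation K G) f T ≤
        LinearMap.ker (LinearMap.proj 1 : (G → K) →ₗ[K] K) ↔ ∀ g ∈ T, f g = 0 := by
  simp [orbitSpan_le_iff]

variable [Field K]

variable (K G) in
/-- The algebra of representative functions on `G`: those whose translates span a
finite-dimensional space. -/
def representativeFunctions [Monoid G] : Subalgebra K (G → K) where
  carrier := {f | FiniteDimensional K (orbitSpan (rightTranslation K G) f Set.univ)}
  mul_mem' {f₁ f₂} (_ : FiniteDimensional K _) (_ : FiniteDimensional K _) := by
    let W := orbitSpan (rightTranslation K G) f₁ Set.univ *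
      orbitSpan (rightTranslation K G) f₂ Set.univ
    have : FiniteDimensional K W :=
      Module.Finite.iff_fg.2 ((Module.Finite.iff_fg.1 ‹_›).mul (Module.Finite.iff_fg.1 ‹_›))
    refine finiteDimensional_orbitSpan_of_forall_mem W fun g hg => ?_
    rw [rightTranslation_map_mul]
    exact Submodule.mul_mem_mul (apply_mem_orbitSpan hg) (apply_mem_orbitSpan hg)
  add_mem' {f₁ f₂} (_ : FiniteDimensional K _) (_ : FiniteDimensional K _) := by
    let W := orbitSpan (rightTranslation K G) f₁ Set.univ ⊔
      orbitSpan (rightTranslation K G) f₂ Set.univ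
    refine finiteDimensional_orbitSpan_of_forall_mem W fun g hg => ?_
    rw [map_add]
    exact Submodule.add_mem_sup (apply_mem_orbitSpan hg) (apply_mem_orbitSpan hg)
  algebraMap_mem' c :=
    finiteDimensional_orbitSpan_of_forall_mem (K ∙ algebraMap K (G → K) c)
      fun _ _ => Submodule.mem_span_singleton_self _

theorem mem_representativeFunctions [Monoid G] {f : G → K} :
    f ∈ representativeFunctions K G ↔
      FiniteDimensional K (orbitSpan (rightTranslation K G) f Set.univ) := Iff.rfl

theorem exists_pow_forall_mem_closure_eq_zero [Group G] {f : G → K}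
    (hf : f ∈ representativeFunctions K G) :
    ∃ n : ℕ, ∀ S : Set G, 1 ∈ S → (∀ g ∈ S ^ n, f g = 0) →
      ∀ g ∈ Subgroup.closure S, f g = 0 := by
  have : FiniteDimensional K (orbitSpan (rightTranslation K G) f Set.univ) :=
    mem_representativeFunctions.1 hf
  refine ⟨Module.finrank K (orbitSpan (rightTranslation K G) f Set.univ), fun S h1 hS => ?_⟩
  rw [← orbitSpan_rightTranslation_le_ker_iff] at hS
  exact orbitSpan_rightTranslation_le_ker_iff.1 ((orbitSpan_closure_le h1 le_rfl).trans hS)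

end RepresentativeFunctions

section MatrixEntries

variable {G K ι : Type*} [Field K] [Fintype ι] [DecidableEq ι]

theorem entry_mem_representativeFunctions [Monoid G] (ρ : G →* Matrix ι ι K) (i j : ι) :
    (fun g => ρ g i j) ∈ representativeFunctions K G := by
  have translate_eq (h : G) : rightTranslation K G h (fun g => ρ g i j) =
      ∑ l, ρ h l j • fun g => ρ g i l := by
    ext g
    simp [Matrix.mul_apply, mul_comm]
  let W := Submodule.span K (Set.range fun l g => ρ g i l)
  have : FiniteDimensional K W := FiniteDimensional.span_of_finite K (Set.finite_range _)
  refine mem_representativeFunctions.2 (finiteDimensional_orbitSpan_of_forall_mem W fun h _ => ?_)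
  rw [translate_eq]
  exact Submodule.sum_smul_mem _ _ fun l _ => Submodule.subset_span ⟨l, rfl⟩

theorem eval_entries_mem_representativeFunctions [Monoid G] (ρ : G →* Matrix ι ι K)
    (p : MvPolynomial (ι × ι) K) :
    (fun g => p.eval fun ij => ρ g ij.1 ij.2) ∈ representativeFunctions K G := by
  have eval_eq : (fun g => p.eval fun ij => ρ g ij.1 ij.2) =
      p.eval₂ (algebraMap K (G → K)) fun ij g => ρ g ij.1 ij.2 := by
    ext g
    exact (MvPolynomial.eval₂_comp_left (Pi.evalRingHom (fun _ : G => K) g) (algebraMap K (G → K))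
      (fun ij g => ρ g ij.1 ij.2) p).symm
  rw [eval_eq]
  exact MvPolynomial.eval₂_mem (fun _ _ => Subalgebra.algebraMap_mem _ _)
    fun ij => entry_mem_representativeFunctions ρ ij.1 ij.2

theorem escape_from_subvarieties_general [Group G] (ρ : G →* Matrix ι ι K)
    (P : Set (MvPolynomial (ι × ι) K))
    (hproper : {g | ∀ p ∈ P, p.eval (fun ij => ρ g ij.1 ij.2) = 0} ≠ Set.univ) :
    ∃ k : ℕ, ∀ S : Set G, 1 ∈ S →
      (∀ q : MvPolynomial (ι × ι) K,
        (∀ g ∈ Subgroup.closure S, q.eval (fun ij => ρ g ij.1 ij.2) = 0) →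
          ∀ g, q.eval (fun ij => ρ g ij.1 ij.2) = 0) →
      ¬ S ^ k ⊆ {g | ∀ p ∈ P, p.eval (fun ij => ρ g ij.1 ij.2) = 0} := by
  obtain ⟨p, hp, g₀, hg₀⟩ : ∃ p ∈ P, ∃ g, p.eval (fun ij => ρ g ij.1 ij.2) ≠ 0 := by
    contrapose! hproper
    exact Set.eq_univ_of_forall fun g p hp => hproper p hp g
  obtain ⟨k, hk⟩ :=
    exists_pow_forall_mem_closure_eq_zero (eval_entries_mem_representativeFunctions ρ p)
  exact ⟨k, fun S h1 dense hS => hg₀ (dense p (hk S h1 fun g hg => hS hg p hp) g₀)⟩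

end MatrixEntries

/-- **Escape from subvarieties (Eskin–Mozes–Oh, case `𝔾 = SL_d`).** Let `K` be an
algebraically closed field and `X` a proper Zariski-closed subset of `SL_d(K)`, cut out by a
set `P` of polynomials in the matrix entries. Then there is `k = k(d, X)` such that for every
`S ⊆ SL_d(K)` with `1 ∈ S` generating a Zariski dense subgroup of `SL_d(K)`, the set `S ^ k`
is not contained in `X`. -/
theorem escape_from_subvarieties {K : Type*} [Field K] [IsAlgClosed K] (d : ℕ) (hd : 2 ≤ d)
    (P : Set (MvPolynomial (Fin d × Fin d) K))
    (hproper : {g : Matrix.SpecialLinearGroup (Fin d) K |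
        ∀ p ∈ P, MvPolynomial.eval (fun ij => (g : Matrix (Fin d) (Fin d) K) ij.1 ij.2) p = 0}
      ≠ Set.univ) :
    ∃ k : ℕ,
      ∀ S : Set (Matrix.SpecialLinearGroup (Fin d) K),
        (1 : Matrix.SpecialLinearGroup (Fin d) K) ∈ S →
        -- the subgroup generated by `S` is Zariski dense in `SL_d(K)`:
        (∀ q : MvPolynomial (Fin d × Fin d) K,
          (∀ g : Matrix.SpecialLinearGroup (Fin d) K, g ∈ Subgroup.closure S →
            MvPolynomial.eval (fun ij => (g : Matrix (Fin d) (Fin d) K) ij.1 ij.2) q = 0) →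
          ∀ g : Matrix.SpecialLinearGroup (Fin d) K,
            MvPolynomial.eval (fun ij => (g : Matrix (Fin d) (Fin d) K) ij.1 ij.2) q = 0) →
        ¬ (S ^ k ⊆ {g : Matrix.SpecialLinearGroup (Fin d) K |
            ∀ p ∈ P, MvPolynomial.eval
              (fun ij => (g : Matrix (Fin d) (Fin d) K) ij.1 ij.2) p = 0}) :=
  escape_from_subvarieties_general Matrix.SpecialLinearGroup.coeMonoidHom P hproper
end

section
/- The Margulis lemma (displacement form): For every d ≥ 1 there is a constant ε = ε(d) > 0 such that for every finite set Σ ⊆ SL_d(ℝ), if the subgroup generated by Σ is discrete in SL_d(ℝ) (the induced topology on it is discrete) and is not virtually nilpotent, then E(Σ) = inf_{h ∈ SL_d(ℝ)} sup_{s ∈ Σ} ‖h·s·h⁻¹‖ ≥ 1 + ε, where ‖·‖ is the operator norm on d×d real matrices with respect to the Euclidean norm. -/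
open Matrix Pointwise

/-- The topology on `SL_d(ℝ)` induced from the matrix entries. -/
noncomputable instance {d : ℕ} : TopologicalSpace (Matrix.SpecialLinearGroup (Fin d) ℝ) :=
  inferInstanceAs (TopologicalSpace {A : Matrix (Fin d) (Fin d) ℝ // A.det = 1})

/-- The `ℓ²`-norm of a vector in `ℝᵈ`. -/
noncomputable def rvNorm {d : ℕ} (x : Fin d → ℝ) : ℝ :=
  Real.sqrt (∑ i, x i ^ 2)

/-- The operator norm of a real `d × d` matrix with respect to the Euclidean norm on `ℝᵈ`
(supremum over the closed unit ball). -/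
noncomputable def rOpNorm {d : ℕ} (M : Matrix (Fin d) (Fin d) ℝ) : ℝ :=
  sSup {r : ℝ | ∃ x : Fin d → ℝ, rvNorm x ≤ 1 ∧ r = rvNorm (M.mulVec x)}

/-!
Commutators with elements within `1/16` of `1` halve the distance to `1`, so a discrete group
generated by such elements is nilpotent (Zassenhaus). On the other hand, if the generators of a
discrete group have norm at most `1 + ε` with `(1 + ε) ^ n < 2`, then words of length `n` have norm
at most `2`. Let `H` be the subgroup generated by the elements within `1/16` of `1`. Elements of
norm at most `2` in different cosets of `H` are a definite distance apart, because inversion is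
bounded on bounded subsets of `SL_d(ℝ)`. So words of length `n` meet at most `n` cosets if `n` is
chosen as a packing number of the ball of radius `2`. Hence the balls around `H` in its Schreier
graph stop growing within radius `n`, and the nilpotent subgroup `H` has finite index.
-/

open Topology Filter Metric
open scoped commutatorElement NNReal

section Zassenhaus

variable {G : Type*} [Group G]

theorem commutatorElement_mem_of_closure_eq_top {N : Subgroup G} [N.Normal] {T : Set G}
    (hT : Subgroup.closure T = ⊤) {c : G} (hc : ∀ t ∈ T, ⁅c, t⁆ ∈ N) (g : G) : ⁅c, g⁆ ∈ N := by
  let q := QuotientGroup.mk' N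
  have mem_iff (x : G) : ⁅c, x⁆ ∈ N ↔ x ∈ (Subgroup.centralizer {q c}).comap q := by
    rw [← QuotientGroup.eq_one_iff, ← QuotientGroup.mk'_apply, map_commutatorElement,
      commutatorElement_eq_one_iff_mul_comm, Subgroup.mem_comap,
      Subgroup.mem_centralizer_singleton_iff, eq_comm]
  have hle : Subgroup.closure T ≤ (Subgroup.centralizer {q c}).comap q :=
    (Subgroup.closure_le _).2 fun t ht ↦ (mem_iff t).1 (hc t ht)
  exact (mem_iff g).2 (hle (hT ▸ Subgroup.mem_top g))

theorem isNilpotent_of_commutatorElement_mem {T : Set G} (hT : Subgroup.closure T = ⊤)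
    {V : ℕ → Set G} (hV0 : V 0 ⊆ {1}) (hV : ∀ n, ∀ c ∈ V (n + 1), ∀ t ∈ T, ⁅c, t⁆ ∈ V n)
    {n : ℕ} (hTV : T ⊆ V n) : Group.IsNilpotent G := by
  have hcentral (k : ℕ) : V k ⊆ Subgroup.upperCentralSeries G k := by
    induction k with
    | zero => simpa using hV0
    | succ k ih =>
      exact fun c hc ↦ Subgroup.mem_upperCentralSeries_succ_iff.2 <|
        commutatorElement_mem_of_closure_eq_top hT fun t ht ↦ ih (hV k c hc t ht)
  refine ⟨n, eq_top_iff.2 ?_⟩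
  rw [← hT, Subgroup.closure_le]
  exact hTV.trans (hcentral n)

variable {A : Type*} [NormedRing A]

theorem norm_inv_le_two_of_norm_sub_one_le [NormOneClass A] {u : Aˣ}
    (hu : ‖(u : A) - 1‖ ≤ 1 / 2) : ‖(↑u⁻¹ : A)‖ ≤ 2 := by
  have hinv : (↑u⁻¹ : A) = 1 - ↑u⁻¹ * (u - 1) := by simp [mul_sub]
  have : ‖(↑u⁻¹ : A)‖ ≤ 1 + ‖(↑u⁻¹ : A)‖ * (1 / 2) :=
    calc ‖(↑u⁻¹ : A)‖ = ‖1 - ↑u⁻¹ * ((u : A) - 1)‖ := by rw [← hinv]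
      _ ≤ ‖(1 : A)‖ + ‖↑u⁻¹ * ((u : A) - 1)‖ := norm_sub_le _ _
      _ ≤ 1 + ‖(↑u⁻¹ : A)‖ * ‖(u : A) - 1‖ := by rw [norm_one]; gcongr; exact norm_mul_le _ _
      _ ≤ 1 + ‖(↑u⁻¹ : A)‖ * (1 / 2) := by gcongr
  linarith

theorem norm_commutatorElement_sub_one_le_half [NormOneClass A] {a b : Aˣ}
    (ha : ‖(a : A) - 1‖ ≤ 1 / 2) (hb : ‖(b : A) - 1‖ ≤ 1 / 16) :
    ‖(⁅a, b⁆ : Aˣ).val - 1‖ ≤ ‖(a : A) - 1‖ / 2 :=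
  calc ‖(⁅a, b⁆ : Aˣ).val - 1‖
      ≤ 2 * ‖(↑a⁻¹ : A)‖ * ‖(↑b⁻¹ : A)‖ * ‖(a : A) - 1‖ * ‖(b : A) - 1‖ :=
        norm_commutator_units_sub_one_le a b
    _ ≤ 2 * 2 * 2 * ‖(a : A) - 1‖ * (1 / 16) := by
        gcongr
        · exact norm_inv_le_two_of_norm_sub_one_le ha
        · exact norm_inv_le_two_of_norm_sub_one_le (by linarith)
    _ = ‖(a : A) - 1‖ / 2 := by ring

variable [TopologicalSpace G] [DiscreteTopology G] {φ : G →* Aˣ}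

theorem exists_forall_norm_sub_one_lt_imp_eq_one (hφ : IsInducing fun g ↦ (φ g : A)) :
    ∃ η > 0, ∀ g, ‖(φ g : A) - 1‖ < η → g = 1 := by
  have hone : {(1 : G)} ∈ 𝓝 1 := (isOpen_discrete _).mem_nhds rfl
  rw [hφ.nhds_eq_comap, (Metric.nhds_basis_ball.comap _).mem_iff] at hone
  obtain ⟨η, hη, hball⟩ := hone
  exact ⟨η, hη, fun g hg ↦ hball (by simpa [dist_eq_norm] using hg)⟩

theorem isNilpotent_of_closure_norm_sub_one_lt [NormOneClass A]
    (hφ : IsInducing fun g ↦ (φ g : A))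
    (hgen : Subgroup.closure {g | ‖(φ g : A) - 1‖ < 1 / 16} = ⊤) : Group.IsNilpotent G := by
  obtain ⟨η, hη, hdisc⟩ := exists_forall_norm_sub_one_lt_imp_eq_one hφ
  obtain ⟨n, hn⟩ := pow_unbounded_of_one_lt (1 / 16 / η) one_lt_two
  rw [div_lt_iff₀ hη] at hn
  let V (k : ℕ) : Set G := {g | ‖(φ g : A) - 1‖ < 1 / 16 ∧ ‖(φ g : A) - 1‖ < 2 ^ k * η}
  refine isNilpotent_of_commutatorElement_mem hgen (V := V) ?_ ?_
    (n := n) fun g hg ↦ ⟨hg, hg.trans hn⟩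
  · exact fun g hg ↦ hdisc g (by simpa using hg.2)
  · rintro k c ⟨hc, hck⟩ t ht
    have hhalf : ‖(φ ⁅c, t⁆ : A) - 1‖ ≤ ‖(φ c : A) - 1‖ / 2 := by
      rw [map_commutatorElement]
      exact norm_commutatorElement_sub_one_le_half (by linarith) (le_of_lt ht)
    have := norm_nonneg ((φ c : A) - 1)
    rw [pow_succ] at hck
    constructor <;> linarith

end Zassenhaus

section Growth

theorem exists_finite_eq_succ_of_encard_le {X : Type*} {F : ℕ → Set X} (hF : Monotone F)
    (hF0 : (F 0).Nonempty) {n : ℕ} (hn : (F n).encard ≤ n) :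
    ∃ k, (F k).Finite ∧ F (k + 1) = F k := by
  have hfin {k : ℕ} (hk : k ≤ n) : (F k).Finite :=
    (Set.finite_of_encard_le_coe hn).subset (hF hk)
  by_contra! hne
  have hgrow (k : ℕ) (hk : k ≤ n) : (k : ℕ∞) < (F k).encard := by
    induction k with
    | zero => simpa using hF0
    | succ k ih =>
      have hlt : (F k).encard < (F (k + 1)).encard :=
        (hfin (by omega)).encard_lt_encard
          ((hF k.le_succ).ssubset_of_ne (hne k (hfin (by omega))).symm)
      push_cast
      exact (Order.add_one_le_of_lt (ih (by omega))).trans_lt hlt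
  exact (hgrow n le_rfl).not_ge hn

variable {G X : Type*} [Group G] [MulAction G X] [MulAction.IsPretransitive G X] {T : Set G}

theorem eq_univ_of_smul_subset (hT : Subgroup.closure T = ⊤) {F : Set X} (hF : F.Finite)
    (hne : F.Nonempty) (hTF : ∀ t ∈ T, t • F ⊆ F) : F = Set.univ := by
  have hstab : Subgroup.closure T ≤ MulAction.stabilizer G F :=
    (Subgroup.closure_le _).2 fun t ht ↦
      (MulAction.mem_stabilizer_set_iff_smul_set_subset hF).2 (hTF t ht)
  obtain ⟨x, hx⟩ := hne
  refine Set.eq_univ_of_forall fun y ↦ ?_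
  obtain ⟨g, rfl⟩ := MulAction.exists_smul_eq G x y
  have hg : g • F = F := hstab (hT ▸ Subgroup.mem_top g)
  exact hg ▸ Set.smul_mem_smul_set hx

theorem finite_of_encard_pow_smul_le (hT : Subgroup.closure T = ⊤) (x : X) {n : ℕ}
    (hn : (insert 1 T ^ n • ({x} : Set X)).encard ≤ n) : Finite X := by
  let F (k : ℕ) : Set X := insert 1 T ^ k • {x}
  have hmono : Monotone F := fun _ _ hkl ↦
    Set.smul_subset_smul_right (Set.pow_right_monotone (Set.mem_insert 1 T) hkl)
  have hx (k : ℕ) : x ∈ F k :=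
    hmono k.zero_le (by simp [F])
  obtain ⟨k, hfin, hk⟩ := exists_finite_eq_succ_of_encard_le hmono ⟨x, hx 0⟩ hn
  have hinv (t : G) (ht : t ∈ T) : t • F k ⊆ F k :=
    calc t • F k ⊆ insert 1 T • F k := Set.smul_set_subset_smul (Set.mem_insert_of_mem 1 ht)
      _ = F (k + 1) := by simp only [F, pow_succ', mul_smul]
      _ = F k := hk
  exact Set.finite_univ_iff.1 (eq_univ_of_smul_subset hT hfin ⟨x, hx k⟩ hinv ▸ hfin)

end Growth

section Packing

theorem packingNumber_ne_top_of_totallyBounded {X : Type*} [PseudoEMetricSpace X] {K : Set X}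
    (hK : TotallyBounded K) {r : ℝ≥0} (hr : r ≠ 0) : packingNumber r K ≠ ⊤ := by
  obtain ⟨N, -, hN, hcover⟩ := exists_finite_isCover_of_totallyBounded (half_pos hr.bot_lt).ne' hK
  refine ne_top_of_le_ne_top (Set.encard_ne_top_iff.2 hN) ?_
  calc packingNumber r K = packingNumber (2 * (r / 2)) K := by rw [mul_div_cancel₀ r two_ne_zero]
    _ ≤ externalCoveringNumber (r / 2) K := packingNumber_two_mul_le_externalCoveringNumber _ _
    _ ≤ N.encard := hcover.externalCoveringNumber_le_encard

theorem encard_image_le_packingNumber {P X Y : Type*} [PseudoEMetricSpace X] {f : P → X}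
    {q : P → Y} {s : Set P} {K : Set X} (hsK : Set.MapsTo f s K) {r : ℝ≥0}
    (hq : ∀ p ∈ s, ∀ p' ∈ s, edist (f p) (f p') ≤ r → q p = q p') :
    (q '' s).encard ≤ packingNumber r K := by
  obtain ⟨s', hs', hbij⟩ := s.exists_subset_bijOn q
  have hsep {p p'} (hp : p ∈ s') (hp' : p' ∈ s') (hle : edist (f p) (f p') ≤ r) : p = p' :=
    hbij.injOn hp hp' (hq p (hs' hp) p' (hs' hp') hle)
  have hinj : s'.InjOn f := fun p hp p' hp' h ↦ hsep hp hp' (by simp [h])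
  rw [← hbij.image_eq, hbij.injOn.encard_image, ← hinj.encard_image]
  refine IsSeparated.encard_le_packingNumber (hsK.mono_left hs').image_subset ?_
  rintro _ ⟨p, hp, rfl⟩ _ ⟨p', hp', rfl⟩ hne
  exact lt_of_not_ge fun hle ↦ hne (congrArg f (hsep hp hp' hle))

theorem encard_image_mk_le_packingNumber {G A : Type*} [Group G] [NormedRing A] {φ : G →* Aˣ}
    {H : Subgroup G} {C R : ℝ} {r : ℝ≥0} (hC : ∀ g, ‖(φ g : A)‖ ≤ R → ‖(φ g⁻¹ : A)‖ ≤ C)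
    (hH : ∀ g, ‖(φ g : A) - 1‖ ≤ C * r → g ∈ H) :
    ((↑) '' {g | ‖(φ g : A)‖ ≤ R} : Set (G ⧸ H)).encard ≤
      packingNumber r (closedBall (0 : A) R) := by
  refine encard_image_le_packingNumber (f := fun g ↦ (φ g : A)) (fun g hg ↦ by simpa using hg) ?_
  intro g hg g' _ hgg'
  rw [edist_comm, edist_dist, dist_eq_norm, ENNReal.ofReal_le_coe] at hgg'
  refine QuotientGroup.eq.2 (hH _ ?_)
  calc ‖(φ (g⁻¹ * g') : A) - 1‖ = ‖(φ g⁻¹ : A) * (φ g' - φ g)‖ := by simp [mul_sub]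
    _ ≤ ‖(φ g⁻¹ : A)‖ * ‖(φ g' : A) - φ g‖ := norm_mul_le _ _
    _ ≤ C * r := mul_le_mul (hC g hg) hgg' (norm_nonneg _) ((norm_nonneg _).trans (hC g hg))

end Packing

section NormedRing

theorem exists_pos_one_add_pow_lt (n : ℕ) {c : ℝ} (hc : 1 < c) :
    ∃ ε : ℝ, 0 < ε ∧ (1 + ε) ^ n < c := by
  have hcont : Tendsto (fun ε : ℝ ↦ (1 + ε) ^ n) (𝓝[>] 0) (𝓝 1) :=
    tendsto_nhdsWithin_of_tendsto_nhds (Continuous.tendsto' (by fun_prop) _ _ (by simp))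
  exact (eventually_mem_nhdsWithin.and (hcont.eventually_lt_const hc)).exists

theorem norm_le_pow_of_mem_insert_one_pow {G A : Type*} [Group G] [NormedRing A] [NormOneClass A]
    {φ : G →* Aˣ} {T : Set G} {c : ℝ} (hc : 1 ≤ c) (hT : ∀ t ∈ T, ‖(φ t : A)‖ ≤ c) {n : ℕ} {g : G}
    (hg : g ∈ insert 1 T ^ n) : ‖(φ g : A)‖ ≤ c ^ n := by
  induction n generalizing g with
  | zero => simp_all
  | succ n ih =>
    rw [pow_succ] at hg ⊢
    obtain ⟨g, hg, t, ht, rfl⟩ := hg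
    have ht' : ‖(φ t : A)‖ ≤ c := by
      obtain rfl | ht := ht
      · simpa using hc
      · exact hT t ht
    rw [map_mul, Units.val_mul]
    exact (norm_mul_le _ _).trans (by gcongr; exact ih hg)

theorem exists_pos_isVirtuallyNilpotent_of_norm_le.{u} {A : Type*} [NormedRing A] [NormOneClass A]
    [ProperSpace A] (C : ℝ) :
    ∃ ε : ℝ, 0 < ε ∧ ∀ {G : Type u} [Group G] [TopologicalSpace G] [DiscreteTopology G]
      {φ : G →* Aˣ} {T : Set G}, IsInducing (fun g ↦ (φ g : A)) →
      (∀ g, ‖(φ g : A)‖ ≤ 2 → ‖(φ g⁻¹ : A)‖ ≤ C) → Subgroup.closure T = ⊤ →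
      (∀ t ∈ T, ‖(φ t : A)‖ ≤ 1 + ε) → Group.IsVirtuallyNilpotent G := by
  obtain ⟨r, hr, hCr⟩ := exists_pos_mul_lt (by norm_num : (0 : ℝ) < 1 / 16) C
  lift r to ℝ≥0 using hr.le
  obtain ⟨n, hn⟩ := ENat.ne_top_iff_exists.1 <| packingNumber_ne_top_of_totallyBounded
    (isCompact_closedBall (0 : A) 2).totallyBounded (NNReal.coe_pos.1 hr).ne'
  obtain ⟨ε, hε, hεn⟩ := exists_pos_one_add_pow_lt n one_lt_two
  refine ⟨ε, hε, fun {G} _ _ _ φ T hφ hC hT hTε ↦ ?_⟩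
  let H : Subgroup G := Subgroup.closure {g | ‖(φ g : A) - 1‖ < 1 / 16}
  refine ⟨H, ?_, ?_⟩
  · exact isNilpotent_of_closure_norm_sub_one_lt (φ := φ.comp H.subtype)
      (hφ.comp IsInducing.subtypeVal) Subgroup.closure_closure_coe_preimage
  · have hpow : insert 1 T ^ n ⊆ {g | ‖(φ g : A)‖ ≤ 2} := fun g hg ↦
      (norm_le_pow_of_mem_insert_one_pow (by linarith) hTε hg).trans hεn.le
    have hcard : (insert 1 T ^ n • ({((1 : G) : G ⧸ H)} : Set (G ⧸ H))).encard ≤ n :=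
      calc (insert 1 T ^ n • ({((1 : G) : G ⧸ H)} : Set (G ⧸ H))).encard
          = ((↑) '' (insert 1 T ^ n) : Set (G ⧸ H)).encard := by
            simp [Set.smul_singleton]
        _ ≤ ((↑) '' {g | ‖(φ g : A)‖ ≤ 2} : Set (G ⧸ H)).encard := by gcongr
        _ ≤ packingNumber r (closedBall (0 : A) 2) :=
          encard_image_mk_le_packingNumber hC fun g hg ↦
            Subgroup.subset_closure (hg.trans_lt hCr)
        _ = n := hn.symm
    exact Subgroup.finiteIndex_iff_finite_quotient.2 (finite_of_encard_pow_smul_le hT _ hcard)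

end NormedRing

section SpecialLinearGroup

open scoped Matrix.Norms.L2Operator

variable {n 𝕜 : Type*} [Fintype n] [DecidableEq n] [RCLike 𝕜]

theorem exists_norm_inv_le_of_norm_le (R : ℝ) :
    ∃ C, ∀ g : SpecialLinearGroup n 𝕜, ‖(g : Matrix n n 𝕜)‖ ≤ R →
      ‖(↑g⁻¹ : Matrix n n 𝕜)‖ ≤ C := by
  have : ProperSpace (Matrix n n 𝕜) := FiniteDimensional.proper 𝕜 _
  obtain ⟨C, hC⟩ := (isCompact_closedBall (0 : Matrix n n 𝕜) R).exists_bound_of_continuousOn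
    (Continuous.matrix_adjugate continuous_id).continuousOn
  exact ⟨C, fun g hg ↦ by simpa [SpecialLinearGroup.coe_inv] using hC g (by simpa using hg)⟩

theorem exists_pos_isVirtuallyNilpotent_closure_of_norm_conj_le [Nonempty n] :
    ∃ ε : ℝ, 0 < ε ∧ ∀ (S : Set (SpecialLinearGroup n 𝕜)) (h : SpecialLinearGroup n 𝕜),
      DiscreteTopology (Subgroup.closure S) →
      (∀ s ∈ S, ‖(↑(h * s * h⁻¹) : Matrix n n 𝕜)‖ ≤ 1 + ε) →
      Group.IsVirtuallyNilpotent (Subgroup.closure S) := by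
  have : ProperSpace (Matrix n n 𝕜) := FiniteDimensional.proper 𝕜 _
  obtain ⟨C, hC⟩ := exists_norm_inv_le_of_norm_le (n := n) (𝕜 := 𝕜) 2
  obtain ⟨ε, hε, hnil⟩ := exists_pos_isVirtuallyNilpotent_of_norm_le (A := Matrix n n 𝕜) C
  refine ⟨ε, hε, fun S h _ hS ↦ ?_⟩
  let φ : Subgroup.closure S →* GL n 𝕜 := SpecialLinearGroup.toGL.comp
    ((MulAut.conj h).toMonoidHom.comp (Subgroup.closure S).subtype)
  have hφ : IsInducing fun g ↦ (φ g : Matrix n n 𝕜) :=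
    IsInducing.subtypeVal.comp <| (Homeomorph.mulRight h⁻¹).isInducing.comp <|
      (Homeomorph.mulLeft h).isInducing.comp IsInducing.subtypeVal
  refine hnil hφ (fun g hg ↦ ?_) (Subgroup.closure_closure_coe_preimage (k := S))
    fun s hs ↦ hS s hs
  rw [map_inv]
  exact hC (h * g * h⁻¹) hg

end SpecialLinearGroup

section OperatorNorm

open scoped Matrix.Norms.L2Operator

theorem rvNorm_eq_norm {d : ℕ} (x : Fin d → ℝ) : rvNorm x = ‖WithLp.toLp 2 x‖ := by
  simp [rvNorm, EuclideanSpace.norm_eq]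

theorem rOpNorm_eq_norm {d : ℕ} (M : Matrix (Fin d) (Fin d) ℝ) : rOpNorm M = ‖M‖ := by
  rw [rOpNorm, Matrix.l2_opNorm_def, ← ContinuousLinearMap.sSup_unitClosedBall_eq_norm]
  congr 1
  ext r
  constructor
  · rintro ⟨x, hx, rfl⟩
    exact ⟨WithLp.toLp 2 x, by simpa [rvNorm_eq_norm] using hx, by rw [rvNorm_eq_norm]; rfl⟩
  · rintro ⟨x, hx, rfl⟩
    exact ⟨x.ofLp, by simpa [rvNorm_eq_norm] using hx, by rw [rvNorm_eq_norm]; rfl⟩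

theorem bddAbove_rOpNorm_conj {d : ℕ} {S : Set (SpecialLinearGroup (Fin d) ℝ)}
    (hS : BddAbove ((fun s : SpecialLinearGroup (Fin d) ℝ ↦
      rOpNorm (s : Matrix (Fin d) (Fin d) ℝ)) '' S))
    (h : SpecialLinearGroup (Fin d) ℝ) :
    BddAbove ((fun s : SpecialLinearGroup (Fin d) ℝ ↦
      rOpNorm ((h * s * h⁻¹ : SpecialLinearGroup (Fin d) ℝ) : Matrix (Fin d) (Fin d) ℝ)) '' S) := by
  obtain ⟨B, hB⟩ := hS
  refine ⟨‖(h : Matrix (Fin d) (Fin d) ℝ)‖ * B * ‖(↑h⁻¹ : Matrix (Fin d) (Fin d) ℝ)‖, ?_⟩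
  rintro _ ⟨s, hs, rfl⟩
  have hsB : ‖(s : Matrix (Fin d) (Fin d) ℝ)‖ ≤ B := by
    rw [← rOpNorm_eq_norm]
    exact hB ⟨s, hs, rfl⟩
  calc rOpNorm ((h * s * h⁻¹ : SpecialLinearGroup (Fin d) ℝ) : Matrix (Fin d) (Fin d) ℝ)
      = ‖(h * s * (h⁻¹ : SpecialLinearGroup (Fin d) ℝ) : Matrix (Fin d) (Fin d) ℝ)‖ :=
        rOpNorm_eq_norm _
    _ ≤ ‖(h : Matrix (Fin d) (Fin d) ℝ)‖ * ‖(s : Matrix (Fin d) (Fin d) ℝ)‖ *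
        ‖(↑h⁻¹ : Matrix (Fin d) (Fin d) ℝ)‖ := norm_mul₃_le
    _ ≤ ‖(h : Matrix (Fin d) (Fin d) ℝ)‖ * B * ‖(↑h⁻¹ : Matrix (Fin d) (Fin d) ℝ)‖ := by gcongr

end OperatorNorm

theorem margulis_lemma_general (d : ℕ) (hd : 1 ≤ d) :
    ∃ ε : ℝ, 0 < ε ∧
      ∀ S : Set (SpecialLinearGroup (Fin d) ℝ),
        BddAbove ((fun s : SpecialLinearGroup (Fin d) ℝ ↦
          rOpNorm (s : Matrix (Fin d) (Fin d) ℝ)) '' S) →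
        DiscreteTopology (Subgroup.closure S) →
        ¬ Group.IsVirtuallyNilpotent (Subgroup.closure S) →
        1 + ε ≤ ⨅ h : SpecialLinearGroup (Fin d) ℝ,
          sSup ((fun s : SpecialLinearGroup (Fin d) ℝ ↦
            rOpNorm ((h * s * h⁻¹ : SpecialLinearGroup (Fin d) ℝ) :
              Matrix (Fin d) (Fin d) ℝ)) '' S) := by
  have : NeZero d := ⟨by omega⟩
  obtain ⟨ε, hε, hnil⟩ :=
    exists_pos_isVirtuallyNilpotent_closure_of_norm_conj_le (n := Fin d) (𝕜 := ℝ)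
  refine ⟨ε, hε, fun S hbdd hdisc hS ↦ le_ciInf fun h ↦ ?_⟩
  contrapose! hS
  refine hnil S h hdisc fun s hs ↦ ?_
  rw [← rOpNorm_eq_norm]
  exact (le_csSup (bddAbove_rOpNorm_conj hbdd h) ⟨s, hs, rfl⟩).trans hS.le

/-- **The Margulis lemma (displacement form).** For every `d ≥ 1` there is `ε = ε(d) > 0`
such that every finite `S ⊆ SL_d(ℝ)` generating a discrete, non-virtually-nilpotent subgroup
satisfies `E(S) = inf_h sup_{s ∈ S} ‖h s h⁻¹‖ ≥ 1 + ε`. -/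
theorem margulis_lemma (d : ℕ) (hd : 1 ≤ d) :
    ∃ ε : ℝ, 0 < ε ∧
      ∀ S : Finset (Matrix.SpecialLinearGroup (Fin d) ℝ),
        DiscreteTopology
          ↥(Subgroup.closure (S : Set (Matrix.SpecialLinearGroup (Fin d) ℝ))) →
        (¬ ∃ H : Subgroup ↥(Subgroup.closure (S : Set (Matrix.SpecialLinearGroup (Fin d) ℝ))),
          H.FiniteIndex ∧ Group.IsNilpotent ↥H) →
        1 + ε ≤ ⨅ h : Matrix.SpecialLinearGroup (Fin d) ℝ,
          sSup ((fun s : Matrix.SpecialLinearGroup (Fin d) ℝ =>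
              rOpNorm ((h * s * h⁻¹ : Matrix.SpecialLinearGroup (Fin d) ℝ) :
                Matrix (Fin d) (Fin d) ℝ)) ''
            (S : Set (Matrix.SpecialLinearGroup (Fin d) ℝ))) := by
  obtain ⟨ε, hε, hle⟩ := margulis_lemma_general d hd
  exact ⟨ε, hε, fun S hdisc hS ↦ hle S (S.finite_toSet.image _).bddAbove hdisc
    fun ⟨H, hnil, hfin⟩ ↦ hS ⟨H, hfin, hnil⟩⟩
end
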